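/- If the Erdős set E has Hausdorff dimension 0, then Szemerédi's theorem holds: every A ⊆ ℕ with positive upper Banach density contains arbitrarily long arithmetic progressions. -/

import Mathlib

open Filter MeasureTheory Set

/-- The `n`-th binary digit of `x ∈ [0,1)` (dyadic rationals get the
terminating expansion, i.e. the one with finitely many `1`'s). -/
noncomputable def digit (x : ℝ) (n : ℕ) : ℕ := (⌊x * 2 ^ n⌋).toNat % 2

/-- Positions of digit `1` in the binary expansion of `x`. -/
def onesOf (x : ℝ) : Set ℕ := {n : ℕ | digit x n = 1}

/-- `A` contains an `m`-term arithmetic progression. -/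
def HasAP (A : Set ℕ) (m : ℕ) : Prop :=
  ∃ a d : ℕ, 1 ≤ d ∧ ∀ t < m, a + t * d ∈ A

/-- `F i`: numbers in `[0,1)` whose binary expansion contains no `i`-term
arithmetic progression of positions of digit `1`. -/
noncomputable def F (i : ℕ) : Set ℝ :=
  {x ∈ Set.Ico (0 : ℝ) 1 | ¬ HasAP (onesOf x) i}

/-- The Erdős set. -/
noncomputable def E : Set ℝ := ⋃ i, ⋃ (_ : 3 ≤ i), F i

/-- Upper Banach density of a set of naturals. -/
noncomputable def banachDensity (A : Set ℕ) : ℝ :=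
  Filter.limsup
    (fun k : ℕ => ⨆ M : ℕ, ((A ∩ Set.Ico M (M + k)).ncard : ℝ) / k)
    Filter.atTop

/-! For every `A` without `k`-term progressions, the dimension of `F k` is at least the upper Banach
density of `A`. Fix `c` below that density. Then `A` has arbitrarily long windows all of whose
initial segments have density at least `c`, since otherwise cutting `ℕ` greedily into sparse windows
would bound the Banach density by `c`. A limit `S` of these windows, translated to the origin, has
all initial segments of density at least `c`, and it has no `k`-term progression because each of its
initial segments is a translate of a piece of `A`. In particular `S` contains no `k` consecutive
integers, so two reals with binary digits supported on `S` that first differ at position `n` are at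
distance at least `2⁻ⁿ` up to a constant. Deleting the digits outside `S` leaves expansions that
agree in at least `c * n` places: this is a `c`-Hölder map onto `[0, 1]`, so the set of these
reals, which lies in `F k`, has dimension at least `c`. -/

section Digits

open Real

variable {b : ℕ}

theorem ofDigits_eq_head_add_tail_div (u : ℕ → Fin b) :
    ofDigits u = (u 0 + ofDigits fun i ↦ u (i + 1)) / b := by
  rw [ofDigits_eq_sum_add_ofDigits u 1]
  simp only [Finset.sum_range_one, ofDigitsTerm, zero_add, pow_one]
  ring

theorem ofDigits_add_inv_pow_le_one {u : ℕ → Fin b} {m : ℕ} (hm : (u m : ℕ) + 1 < b) :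
    ofDigits u + ((b : ℝ) ^ (m + 1))⁻¹ ≤ 1 := by
  have hb : (0 : ℝ) < b := by exact_mod_cast (by omega : 0 < b)
  induction m generalizing u with
  | zero =>
    have htail := ofDigits_le_one fun i ↦ u (i + 1)
    have hhead : (u 0 : ℝ) + 2 ≤ b := by exact_mod_cast hm
    rw [ofDigits_eq_head_add_tail_div, zero_add, pow_one, inv_eq_one_div, ← add_div, div_le_one hb]
    linarith
  | succ m ih =>
    have htail := ih (u := fun i ↦ u (i + 1)) hm
    have hhead : (u 0 : ℝ) + 1 ≤ b := by exact_mod_cast (u 0).isLt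
    calc ofDigits u + ((b : ℝ) ^ (m + 1 + 1))⁻¹
        = (u 0 + (ofDigits (fun i ↦ u (i + 1)) + ((b : ℝ) ^ (m + 1))⁻¹)) / b := by
          rw [ofDigits_eq_head_add_tail_div, pow_succ _ (m + 1), mul_inv]
          ring
      _ ≤ 1 := by
          rw [div_le_one hb]
          linarith

theorem ofDigits_lt_one {u : ℕ → Fin b} {m : ℕ} (hm : (u m : ℕ) + 1 < b) : ofDigits u < 1 := by
  have hb : (0 : ℝ) < b := by exact_mod_cast (by omega : 0 < b)
  have hpos : 0 < ((b : ℝ) ^ (m + 1))⁻¹ := by positivity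
  linarith [ofDigits_add_inv_pow_le_one hm]

theorem digits_ofDigits [NeZero b] {u : ℕ → Fin b}
    (hu : ∀ n, ∃ m, n ≤ m ∧ (u m : ℕ) + 1 < b) : digits (ofDigits u) b = u := by
  have hb : (b : ℝ) ≠ 0 := by exact_mod_cast NeZero.ne b
  funext i
  induction i generalizing u with
  | zero =>
    obtain ⟨m, hm, hum⟩ := hu 1
    obtain ⟨m, rfl⟩ := Nat.exists_eq_add_of_le' hm
    have hfloor : ⌊ofDigits fun i ↦ u (i + 1)⌋₊ = 0 := Nat.floor_eq_zero.2 (ofDigits_lt_one hum)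
    rw [digits, ofDigits_eq_head_add_tail_div, zero_add, pow_one, div_mul_cancel₀ _ hb,
      add_comm, Nat.floor_add_natCast (ofDigits_nonneg _), hfloor, zero_add]
    exact Fin.ofNat_val_eq_self _
  | succ i ih =>
    have htail : ∀ n, ∃ m, n ≤ m ∧ (u (m + 1) : ℕ) + 1 < b := fun n ↦ by
      obtain ⟨m, hm, hum⟩ := hu (n + 1)
      obtain ⟨m, rfl⟩ := Nat.exists_eq_add_of_le' (Nat.one_le_of_lt hm)
      exact ⟨m, Nat.le_of_succ_le_succ hm, hum⟩
    rw [← ih htail]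
    have hshift : ofDigits u * (b : ℝ) ^ (i + 1 + 1) =
        ofDigits (fun i ↦ u (i + 1)) * (b : ℝ) ^ (i + 1) + (u 0 * b ^ i * b : ℕ) := by
      rw [ofDigits_eq_head_add_tail_div]
      push_cast
      field_simp
      ring
    have htail_nonneg : 0 ≤ ofDigits (fun i ↦ u (i + 1)) * (b : ℝ) ^ (i + 1) :=
      mul_nonneg (ofDigits_nonneg _) (by positivity)
    ext
    rw [digits, digits, hshift, Nat.floor_add_natCast htail_nonneg, Fin.val_ofNat, Fin.val_ofNat,
      Nat.add_mul_mod_self_right]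

-- A digit of `v` below `b - 1` at position `m` stops the carry, so `v` cannot approach `u` through
-- `0.0111… = 0.1000…`.
theorem inv_pow_le_ofDigits_sub_ofDigits {u v : ℕ → Fin b} {n m : ℕ} (huv : ∀ i < n, u i = v i)
    (hn : v n < u n) (hnm : n < m) (hm : (v m : ℕ) + 1 < b) :
    ((b : ℝ) ^ (m + 1))⁻¹ ≤ ofDigits u - ofDigits v := by
  obtain ⟨j, rfl⟩ := Nat.exists_eq_add_of_lt hnm
  have hprefix : ∑ i ∈ Finset.range n, ofDigitsTerm u i = ∑ i ∈ Finset.range n, ofDigitsTerm v i :=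
    Finset.sum_congr rfl fun i hi ↦ by simp only [ofDigitsTerm, huv i (Finset.mem_range.1 hi)]
  have htail_u := ofDigits_nonneg fun i ↦ u (i + (n + 1))
  have htail_v : ofDigits (fun i ↦ v (i + (n + 1))) + ((b : ℝ) ^ (j + 1))⁻¹ ≤ 1 :=
    ofDigits_add_inv_pow_le_one (by rwa [show j + (n + 1) = n + j + 1 by omega])
  have hdigit : (v n : ℝ) + 1 ≤ u n := by exact_mod_cast hn
  rw [ofDigits_eq_sum_add_ofDigits u (n + 1), ofDigits_eq_sum_add_ofDigits v (n + 1),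
    Finset.sum_range_succ, Finset.sum_range_succ, hprefix]
  calc ((b : ℝ) ^ (n + j + 1 + 1))⁻¹ = ((b : ℝ) ^ (n + 1))⁻¹ * ((b : ℝ) ^ (j + 1))⁻¹ := by
        rw [← mul_inv, ← pow_add]
        congr 2
        omega
    _ ≤ ((b : ℝ) ^ (n + 1))⁻¹ * ((u n + ofDigits fun i ↦ u (i + (n + 1))) -
          (v n + ofDigits fun i ↦ v (i + (n + 1)))) := by
        gcongr
        linarith
    _ = _ := by
        simp only [ofDigitsTerm]
        ring

end Digits

section Density

variable {A : Set ℕ}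

theorem infinite_of_mul_le_count [DecidablePred (· ∈ A)] {c : ℝ} (hc : 0 < c)
    (hA : ∀ n : ℕ, c * n ≤ Nat.count (· ∈ A) n) : A.Infinite := by
  intro hfin
  obtain ⟨n, hn⟩ := exists_nat_gt (hfin.toFinset.card / c)
  rw [div_lt_iff₀' hc] at hn
  have hcount : (Nat.count (· ∈ A) n : ℝ) ≤ hfin.toFinset.card := by
    exact_mod_cast Nat.count_le_card (p := (· ∈ A)) hfin n
  exact (hn.trans_le ((hA n).trans hcount)).false

theorem ncard_inter_Ico_eq_count [DecidablePred (· ∈ A)] (M n : ℕ) :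
    (A ∩ Ico M (M + n)).ncard = Nat.count (fun i ↦ M + i ∈ A) n := by
  have himage : A ∩ Ico M (M + n) =
      ((Finset.range n).filter (fun i ↦ M + i ∈ A)).image (M + ·) := by
    ext x
    simp only [mem_inter_iff, mem_Ico, Finset.coe_image, Finset.coe_filter, Finset.mem_range,
      mem_image, mem_ofPred_eq]
    constructor
    · rintro ⟨hx, hMx, hxn⟩
      exact ⟨x - M, ⟨by omega, by rwa [Nat.add_sub_cancel' hMx]⟩, Nat.add_sub_cancel' hMx⟩
    · rintro ⟨i, ⟨hi, hiA⟩, rfl⟩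
      exact ⟨hiA, by omega, by omega⟩
  rw [himage, ncard_coe_finset, Finset.card_image_of_injective _ (add_right_injective M),
    Nat.count_eq_card_filter_range]

theorem banachDensity_le_of_ncard_le {c N : ℝ}
    (h : ∀ M k : ℕ, ((A ∩ Ico M (M + k)).ncard : ℝ) ≤ c * k + N) : banachDensity A ≤ c := by
  have hlim : Tendsto (fun k : ℕ ↦ c + N / k) atTop (nhds c) := by
    simpa using tendsto_const_nhds.add (tendsto_const_div_atTop_nhds_zero_nat N)
  have hle : ∀ᶠ k : ℕ in atTop,
      (⨆ M : ℕ, ((A ∩ Ico M (M + k)).ncard : ℝ) / k) ≤ c + N / k := by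
    filter_upwards [eventually_gt_atTop 0] with k hk
    refine ciSup_le fun M ↦ ?_
    calc ((A ∩ Ico M (M + k)).ncard : ℝ) / k ≤ (c * k + N) / k := by gcongr; exact h M k
      _ = c + N / k := by field_simp
  have hnonneg : ∀ k : ℕ, 0 ≤ ⨆ M : ℕ, ((A ∩ Ico M (M + k)).ncard : ℝ) / k := fun k ↦
    Real.iSup_nonneg fun M ↦ by positivity
  calc banachDensity A ≤ limsup (fun k : ℕ ↦ c + N / k) atTop :=
        limsup_le_limsup hle
          (IsCoboundedUnder.of_frequently_ge (Frequently.of_forall hnonneg)) hlim.isBoundedUnder_le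
    _ = c := hlim.limsup_eq

-- Cut `[M, M + K)` greedily into sparse windows of length at most `N`, leaving a remainder of
-- length at most `N`.
theorem count_le_of_exists_sparse_window {p : ℕ → Prop} [DecidablePred p] {c : ℝ} (hc : 0 ≤ c)
    {N : ℕ} (h : ∀ M, ∃ n ≤ N, (Nat.count (fun i ↦ p (M + i)) n : ℝ) < c * n) (M K : ℕ) :
    (Nat.count (fun i ↦ p (M + i)) K : ℝ) ≤ c * K + N := by
  induction K using Nat.strong_induction_on generalizing M with
  | _ K ih =>
  obtain hKN | hNK := le_or_gt K N
  · have hcount : (Nat.count (fun i ↦ p (M + i)) K : ℝ) ≤ N := by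
      exact_mod_cast (Nat.count_le _).trans hKN
    have : 0 ≤ c * K := by positivity
    linarith
  obtain ⟨n, hnN, hn⟩ := h M
  have hn₀ : n ≠ 0 := by
    rintro rfl
    simp at hn
  obtain ⟨r, rfl⟩ := Nat.exists_eq_add_of_le (hnN.trans hNK.le)
  have hrest := ih r (by omega) (M + n)
  simp only [add_assoc] at hrest
  rw [Nat.count_add]
  push_cast
  linarith

theorem exists_forall_mul_le_count_window [DecidablePred (· ∈ A)] {c : ℝ} (hc : 0 ≤ c)
    (hcA : c < banachDensity A) (N : ℕ) :
    ∃ M, ∀ n ≤ N, c * n ≤ Nat.count (fun i ↦ M + i ∈ A) n := by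
  by_contra! hsparse
  refine hcA.not_ge (banachDensity_le_of_ncard_le (N := N) fun M k ↦ ?_)
  rw [ncard_inter_Ico_eq_count]
  exact count_le_of_exists_sparse_window hc hsparse M k

-- Compactness of the Cantor space: `S` is the limit of the sets `B m` along a nonprincipal
-- ultrafilter.
theorem exists_set_forall_prefix_agree (B : ℕ → Set ℕ) :
    ∃ S : Set ℕ, ∀ N, ∃ m, N ≤ m ∧ ∀ i < N, i ∈ S ↔ i ∈ B m := by
  let S : Set ℕ := {i | ∀ᶠ m in hyperfilter ℕ, i ∈ B m}
  have hagree : ∀ i, ∀ᶠ m in hyperfilter ℕ, i ∈ S ↔ i ∈ B m := fun i ↦ by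
    by_cases hi : i ∈ S
    · filter_upwards [hi] with m hm using iff_of_true hi hm
    · filter_upwards [Ultrafilter.eventually_not.2 hi] with m hm using iff_of_false hi hm
  refine ⟨S, fun N ↦ ?_⟩
  have hlarge : ∀ᶠ m in hyperfilter ℕ, N ≤ m :=
    (eventually_ge_atTop N).filter_mono Nat.hyperfilter_le_atTop
  exact (hlarge.and ((eventually_all_finite (finite_lt_nat N)).2 fun i _ ↦ hagree i)).exists

theorem exists_dense_limit_of_translates {c : ℝ} (hc : 0 ≤ c)
    (hcA : c < banachDensity A) :
    ∃ S : Set ℕ, (∀ N, ∃ M, ∀ i < N, i ∈ S ↔ M + i ∈ A) ∧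
      ∀ [DecidablePred (· ∈ S)] (n : ℕ), c * n ≤ Nat.count (· ∈ S) n := by
  classical
  choose M hM using exists_forall_mul_le_count_window hc hcA
  obtain ⟨S, hS⟩ := exists_set_forall_prefix_agree fun N ↦ {i | M N + i ∈ A}
  refine ⟨S, fun N ↦ ?_, fun n ↦ ?_⟩
  · obtain ⟨m, -, hm⟩ := hS N
    exact ⟨M m, hm⟩
  · obtain ⟨m, hnm, hm⟩ := hS n
    refine (hM m n hnm).trans ?_
    exact_mod_cast Nat.count_mono_left fun i hi ↦ (hm i hi).2

end Density

section RestrictedDigits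

open Real
open scoped NNReal

theorem le_dimH_of_holderOnWith_surjOn {X : Type*} [EMetricSpace X] {s : Set X} {f : X → ℝ}
    {C r : ℝ≥0} (hf : HolderOnWith C r f s) (hsurj : SurjOn f s (Icc 0 1)) : r ≤ dimH s := by
  obtain rfl | hr := eq_zero_or_pos r
  · exact zero_le
  have hIcc : dimH (Icc (0 : ℝ) 1) = 1 := by
    simpa using Real.dimH_of_nonempty_interior (s := Icc (0 : ℝ) 1) (by simp)
  have hle : 1 ≤ dimH s / r := hIcc ▸ (dimH_mono hsurj).trans (hf.dimH_image_le hr)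
  rwa [ENNReal.le_div_iff_mul_le (by simp [hr.ne']) (by simp), one_mul] at hle

variable {b : ℕ} [NeZero b] {S : Set ℕ} {L : ℕ}

/-- The reals in `[0, 1)` whose nonzero base `b` digits all sit at positions in `S`; for `b = 2`
this is the set `E_S` of the paper. Positions are counted from `0` right after the radix point, as
in `Real.digits`. -/
def restrictedDigits (b : ℕ) [NeZero b] (S : Set ℕ) : Set ℝ :=
  {x ∈ Ico 0 1 | Function.support (digits x b) ⊆ S}

/-- The real whose base `b` digits are those of `x` at the positions in `S`, listed in increasing
order. It compresses `restrictedDigits b S` onto `[0, 1]`. -/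
noncomputable def compressDigits (b : ℕ) [NeZero b] (S : Set ℕ) (x : ℝ) : ℝ :=
  ofDigits fun j ↦ digits x b (Nat.nth (· ∈ S) j)

theorem digits_eq_zero_of_mem_restrictedDigits {x : ℝ} (hx : x ∈ restrictedDigits b S) {m : ℕ}
    (hm : m ∉ S) : digits x b m = 0 :=
  Function.notMem_support.1 fun h ↦ hm (hx.2 h)

theorem inv_pow_le_abs_sub_of_mem_restrictedDigits (hb : 1 < b)
    (hgap : ∀ n, ∃ m ∉ S, n ≤ m ∧ m < n + L) {x y : ℝ} (hx : x ∈ restrictedDigits b S)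
    (hy : y ∈ restrictedDigits b S) {n : ℕ} (hlt : ∀ i < n, digits x b i = digits y b i)
    (hn : digits x b n ≠ digits y b n) :
    ((b : ℝ) ^ (n + 1 + L))⁻¹ ≤ |x - y| := by
  wlog hyx : digits y b n < digits x b n generalizing x y
  · rw [abs_sub_comm]
    exact this hy hx (fun i hi ↦ (hlt i hi).symm) hn.symm (lt_of_le_of_ne (not_lt.1 hyx) hn)
  obtain ⟨m, hmS, hnm, hmL⟩ := hgap (n + 1)
  have hdigit : (digits y b m : ℕ) + 1 < b := by
    simpa [digits_eq_zero_of_mem_restrictedDigits hy hmS] using hb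
  have hsep := inv_pow_le_ofDigits_sub_ofDigits hlt hyx hnm hdigit
  rw [ofDigits_digits hb hx.1, ofDigits_digits hb hy.1] at hsep
  have hb' : (1 : ℝ) ≤ b := by exact_mod_cast hb.le
  calc ((b : ℝ) ^ (n + 1 + L))⁻¹ ≤ ((b : ℝ) ^ (m + 1))⁻¹ :=
        inv_anti₀ (by positivity) (pow_le_pow_right₀ hb' (by omega))
    _ ≤ |x - y| := hsep.trans (le_abs_self _)

theorem abs_compressDigits_sub_le [DecidablePred (· ∈ S)] {x y : ℝ}
    {n : ℕ} (h : ∀ i < n, digits x b i = digits y b i) :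
    |compressDigits b S x - compressDigits b S y| ≤ ((b : ℝ) ^ Nat.count (· ∈ S) n)⁻¹ :=
  abs_ofDigits_sub_ofDigits_le fun _ hj ↦ h _ (Nat.nth_lt_of_lt_count hj)

theorem dist_compressDigits_le [DecidablePred (· ∈ S)] (hb : 1 < b) {c : ℝ≥0}
    (hS : ∀ n : ℕ, (c : ℝ) * n ≤ Nat.count (· ∈ S) n)
    (hgap : ∀ n, ∃ m ∉ S, n ≤ m ∧ m < n + L) {x y : ℝ} (hx : x ∈ restrictedDigits b S)
    (hy : y ∈ restrictedDigits b S) :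
    dist (compressDigits b S x) (compressDigits b S y) ≤
      ((b : ℝ) ^ (1 + L)) ^ (c : ℝ) * dist x y ^ (c : ℝ) := by
  obtain rfl | hxy := eq_or_ne x y
  · rw [dist_self]
    positivity
  have hdiff : ∃ i, digits x b i ≠ digits y b i := by
    contrapose! hxy
    rw [← ofDigits_digits hb hx.1, ← ofDigits_digits hb hy.1, funext hxy]
  classical
  let n := Nat.find hdiff
  have hlt : ∀ i < n, digits x b i = digits y b i := fun i hi ↦ not_not.1 (Nat.find_min hdiff hi)
  have hsep := inv_pow_le_abs_sub_of_mem_restrictedDigits hb hgap hx hy hlt (Nat.find_spec hdiff)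
  have hb' : (1 : ℝ) ≤ b := by exact_mod_cast hb.le
  have hb₀ : (0 : ℝ) < b := one_pos.trans_le hb'
  rw [dist_eq, dist_eq, ← mul_rpow (by positivity) (abs_nonneg _)]
  calc |compressDigits b S x - compressDigits b S y| ≤ ((b : ℝ) ^ Nat.count (· ∈ S) n)⁻¹ :=
        abs_compressDigits_sub_le hlt
    _ ≤ ((b : ℝ) ^ (c * n : ℝ))⁻¹ := by
        rw [← rpow_natCast]
        gcongr
        exact hS n
    _ = (((b : ℝ) ^ n)⁻¹) ^ (c : ℝ) := by
        rw [inv_rpow (by positivity), ← rpow_natCast, ← rpow_mul hb₀.le, mul_comm]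
    _ ≤ ((b : ℝ) ^ (1 + L) * |x - y|) ^ (c : ℝ) := by
        gcongr
        calc ((b : ℝ) ^ n)⁻¹ = (b : ℝ) ^ (1 + L) * ((b : ℝ) ^ (n + 1 + L))⁻¹ := by
              rw [add_assoc, pow_add _ n]
              field_simp
          _ ≤ _ := by gcongr

theorem holderOnWith_compressDigits [DecidablePred (· ∈ S)] (hb : 1 < b) {c : ℝ≥0}
    (hS : ∀ n : ℕ, (c : ℝ) * n ≤ Nat.count (· ∈ S) n)
    (hgap : ∀ n, ∃ m ∉ S, n ≤ m ∧ m < n + L) :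
    HolderOnWith (((b : ℝ≥0) ^ (1 + L)) ^ (c : ℝ)) c (compressDigits b S)
      (restrictedDigits b S) := by
  intro x hx y hy
  rw [edist_nndist, edist_nndist, ← ENNReal.coe_rpow_of_nonneg _ c.coe_nonneg]
  exact_mod_cast dist_compressDigits_le hb hS hgap hx hy

theorem surjOn_compressDigits (hb : 1 < b) (hS : S.Infinite)
    (hgap : ∀ n, ∃ m ∉ S, n ≤ m) :
    SurjOn (compressDigits b S) (restrictedDigits b S) (Icc 0 1) := by
  classical
  intro y hy
  obtain ⟨u, -, rfl⟩ := ofDigits_SurjOn hb hy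
  let v : ℕ → Fin b := fun i ↦ if i ∈ S then u (Nat.count (· ∈ S) i) else 0
  have hv : ∀ n, ∃ m, n ≤ m ∧ (v m : ℕ) + 1 < b := fun n ↦ by
    obtain ⟨m, hmS, hnm⟩ := hgap n
    exact ⟨m, hnm, by simpa [v, hmS] using hb⟩
  obtain ⟨m, -, hm⟩ := hv 0
  have hdigits : digits (ofDigits v) b = v := digits_ofDigits hv
  refine ⟨ofDigits v, ⟨⟨ofDigits_nonneg v, ofDigits_lt_one hm⟩, ?_⟩, ?_⟩
  · rw [hdigits]
    intro i hi
    by_contra hiS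
    exact hi (if_neg hiS)
  · rw [compressDigits, hdigits]
    refine congrArg ofDigits (funext fun j ↦ ?_)
    have hmem : Nat.nth (· ∈ S) j ∈ S := Nat.nth_mem_of_infinite hS j
    have hcount : Nat.count (· ∈ S) (Nat.nth (· ∈ S) j) = j :=
      Nat.count_nth_of_infinite (p := (· ∈ S)) hS j
    simp only [v, if_pos hmem, hcount]

theorem le_dimH_restrictedDigits [DecidablePred (· ∈ S)] (hb : 1 < b) {c : ℝ≥0}
    (hS : ∀ n : ℕ, (c : ℝ) * n ≤ Nat.count (· ∈ S) n)
    (hgap : ∀ n, ∃ m ∉ S, n ≤ m ∧ m < n + L) : c ≤ dimH (restrictedDigits b S) := by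
  obtain rfl | hc := eq_zero_or_pos c
  · exact zero_le
  exact le_dimH_of_holderOnWith_surjOn (holderOnWith_compressDigits hb hS hgap)
    (surjOn_compressDigits hb (infinite_of_mul_le_count hc hS) fun n ↦
      let ⟨m, hm, hnm, _⟩ := hgap n
      ⟨m, hm, hnm⟩)

end RestrictedDigits

section ErdosSet

variable {A S : Set ℕ} {k l : ℕ}

theorem HasAP.mono (h : HasAP S k) (hSA : S ⊆ A) : HasAP A k :=
  let ⟨a, d, hd, hmem⟩ := h
  ⟨a, d, hd, fun t ht ↦ hSA (hmem t ht)⟩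

theorem HasAP.of_le (h : HasAP A l) (hkl : k ≤ l) : HasAP A k :=
  let ⟨a, d, hd, hmem⟩ := h
  ⟨a, d, hd, fun t ht ↦ hmem t (ht.trans_le hkl)⟩

theorem HasAP.of_forall_prefix_translate (h : HasAP S k)
    (hSA : ∀ N, ∃ M, ∀ i < N, i ∈ S → M + i ∈ A) : HasAP A k := by
  obtain ⟨a, d, hd, hmem⟩ := h
  obtain ⟨M, hM⟩ := hSA (a + k * d)
  refine ⟨M + a, d, hd, fun t ht ↦ ?_⟩
  rw [add_assoc]
  exact hM _ (by gcongr) (hmem t ht)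

theorem exists_notMem_of_not_hasAP (h : ¬HasAP S k) (n : ℕ) : ∃ m ∉ S, n ≤ m ∧ m < n + k := by
  by_contra! hrun
  refine h ⟨n, 1, le_rfl, fun t ht ↦ ?_⟩
  by_contra hmem
  have := hrun _ hmem (by omega)
  omega

theorem digit_zero {x : ℝ} (hx : x ∈ Ico 0 1) : digit x 0 = 0 := by
  simp [digit, Int.floor_eq_zero_iff.2 hx]

theorem digit_succ {x : ℝ} (n : ℕ) : digit x (n + 1) = Real.digits x 2 n := by
  simp [digit, Real.digits, Int.floor_toNat]

theorem onesOf_subset_succ_image {x : ℝ} (hx : x ∈ restrictedDigits 2 S) :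
    onesOf x ⊆ Nat.succ '' S := by
  rintro (_ | n) hn
  · simp [onesOf, digit_zero hx.1] at hn
  · refine ⟨n, hx.2 fun hzero ↦ ?_, rfl⟩
    simp [onesOf, digit_succ, hzero] at hn

theorem HasAP.of_succ_image (h : HasAP (Nat.succ '' S) k) : HasAP S k := by
  obtain ⟨a, d, hd, hmem⟩ := h
  refine ⟨a - 1, d, hd, fun t ht ↦ ?_⟩
  obtain ⟨a', -, rfl⟩ : ∃ a' ∈ S, a'.succ = a := by simpa using hmem 0 (by omega)
  simpa [Nat.succ_add] using hmem t ht

theorem restrictedDigits_two_subset_F (hS : ¬HasAP S k) : restrictedDigits 2 S ⊆ F k :=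
  fun _ hx ↦ ⟨hx.1, fun h ↦ hS (h.mono (onesOf_subset_succ_image hx)).of_succ_image⟩

theorem F_subset_E (hk : 3 ≤ k) : F k ⊆ E :=
  subset_iUnion₂_of_subset k hk Subset.rfl

end ErdosSet

theorem stmt13_general {A : Set ℕ} {k : ℕ}
    (hdim : dimH (F k) < ENNReal.ofReal (banachDensity A)) : HasAP A k := by
  classical
  by_contra hA
  refine hdim.not_ge (ENNReal.le_of_forall_nnreal_lt fun c hc ↦ ?_)
  obtain ⟨S, hSA, hS⟩ := exists_dense_limit_of_translates c.coe_nonneg (ENNReal.coe_lt_ofReal.1 hc)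
  have hSk : ¬HasAP S k := fun h ↦ hA <| h.of_forall_prefix_translate fun N ↦
    (hSA N).imp fun _ hM i hi ↦ (hM i hi).1
  calc (c : ENNReal) ≤ dimH (restrictedDigits 2 S) :=
        le_dimH_restrictedDigits one_lt_two hS (exists_notMem_of_not_hasAP hSk)
    _ ≤ dimH (F k) := dimH_mono (restrictedDigits_two_subset_F hSk)

theorem stmt13 (hdim : dimH E = 0) :
    ∀ A : Set ℕ, 0 < banachDensity A → ∀ k : ℕ, HasAP A k := by
  intro A hA k
  have hF : dimH (F (max k 3)) ≤ 0 := hdim ▸ dimH_mono (F_subset_E (le_max_right k 3))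
  exact (stmt13_general (hF.trans_lt (ENNReal.ofReal_pos.2 hA))).of_le (le_max_left k 3)
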